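/- arXiv:math/9911142 — 4 statements merged into one kernel-verified Lean document; each statement's English description precedes it below -/
import Mathlib

section
/- Let v ∈ K_p be such that pvp is invertible in the corner algebra pAp. Then there exists a unitary u ∈ A (u*u = uu* = 1) with v = up. -/
/-! Write `p = v*v` and `q = vv*`. The element `x = v + (1 - q)(1 - p)` sends the range of `p` to
that of `q` and the range of `1 - p` to that of `1 - q`. It factors as
`(v + (1 - p))(1 - v*(1 - p))`, where the second factor is unipotent and the first is block
triangular with diagonal blocks `pvp` and `1 - p`; so `x` is invertible as soon as `pvp` is
invertible in the corner. Since `x*x` fixes `p`, so does `|x|`, and the unitary `u = x|x|⁻¹`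
satisfies `up = xp = v`. -/

section Ring

variable {R : Type*} [Ring R]

theorem isUnit_one_sub_mul_comm (a b : R) : IsUnit (1 - a * b) ↔ IsUnit (1 - b * a) := by
  simpa [spectrum.mem_iff, not_iff_not] using
    spectrum.unit_mem_mul_comm (R := ℤ) (a := a) (b := b) (r := 1)

variable {p : R}

theorem isUnit_add_one_sub_of_isUnit_corner (hp : IsIdempotentElem p) {a : hp.Corner}
    (ha : IsUnit a) : IsUnit (a.1 + (1 - p)) := by
  have mul_eq_one {b c : hp.Corner} (hbc : b * c = 1) :
      (b.1 + (1 - p)) * (c.1 + (1 - p)) = 1 := by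
    have hbc' : b.1 * c.1 = p := congrArg Subtype.val hbc
    have hb : b.1 * p = b.1 := congrArg Subtype.val (mul_one b)
    have hc : p * c.1 = c.1 := congrArg Subtype.val (one_mul c)
    calc (b.1 + (1 - p)) * (c.1 + (1 - p))
        = b.1 * c.1 + (b.1 - b.1 * p) + (c.1 - p * c.1) + (1 - p) * (1 - p) := by noncomm_ring
      _ = 1 := by rw [hbc', hb, hc, hp.one_sub.eq]; abel
  obtain ⟨u, rfl⟩ := ha
  exact ⟨⟨_, _, mul_eq_one u.mul_inv, mul_eq_one u.inv_mul⟩, rfl⟩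

theorem isUnit_add_one_sub_iff_compression (hp : IsIdempotentElem p) {v : R} (hv : v * p = v) :
    IsUnit (v + (1 - p)) ↔ IsUnit (p * v * p + (1 - p)) := by
  have h_left : v + (1 - p) = 1 - (p - v) * p := by rw [sub_mul, hp.eq, hv]; abel
  have h_right : p * v * p + (1 - p) = 1 - p * (p - v) := by
    rw [mul_sub, hp.eq, mul_assoc, hv]; abel
  rw [h_left, h_right, isUnit_one_sub_mul_comm]

end Ring

section StarRing

variable {R : Type*} [Ring R] [StarRing R]

/-- The extension of a partial isometry `v` by the compression of the identity to a map from the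
complement of the initial projection `star v * v` to the complement of the final projection
`v * star v`. -/
def complementExtension (v : R) : R :=
  v + (1 - v * star v) * (1 - star v * v)

namespace complementExtension

variable {v : R}

theorem one_sub_initial_mul_star (hv : v * star v * v = v) : (1 - star v * v) * star v = 0 := by
  rw [sub_mul, one_mul, sub_eq_zero]
  simpa [mul_assoc] using (congrArg star hv).symm

theorem mul_initial (hv : v * star v * v = v) :
    complementExtension v * (star v * v) = v := by
  have h_idem : IsIdempotentElem (star v * v) := by
    rw [IsIdempotentElem, mul_assoc, ← mul_assoc v, hv]
  rw [complementExtension, add_mul, mul_assoc (1 - _), h_idem.one_sub_mul_self, mul_zero, add_zero,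
    ← mul_assoc, hv]

theorem star_mul_self_mul_initial (hv : v * star v * v = v) :
    star (complementExtension v) * complementExtension v * (star v * v) = star v * v := by
  have h_compl : (1 - star v * v) * (1 - v * star v) * v = 0 := by
    rw [mul_assoc, sub_mul 1 (v * star v), one_mul, hv, sub_self, mul_zero]
  rw [mul_assoc, mul_initial hv, complementExtension]
  simp only [star_add, star_mul, star_sub, star_one, star_star]
  rw [add_mul, h_compl, add_zero]

theorem eq_mul (hv : v * star v * v = v) :
    complementExtension v = (v + (1 - star v * v)) * (1 - star v * (1 - star v * v)) := by
  calc complementExtension v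
      = v + (1 - star v * v) - v * star v * (1 - star v * v) := by
        rw [complementExtension, sub_mul, one_mul, add_sub_assoc]
    _ = v + (1 - star v * v) - v * star v * (1 - star v * v)
          - (1 - star v * v) * star v * (1 - star v * v) := by
        rw [one_sub_initial_mul_star hv, zero_mul, sub_zero]
    _ = _ := by noncomm_ring

theorem isUnit_iff (hv : v * star v * v = v) :
    IsUnit (complementExtension v) ↔ IsUnit (v + (1 - star v * v)) := by
  have h_unipotent : IsUnit (1 - star v * (1 - star v * v)) := by
    rw [isUnit_one_sub_mul_comm, one_sub_initial_mul_star hv, sub_zero]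
    exact isUnit_one
  rw [eq_mul hv, h_unipotent.mul_right_iff]

end complementExtension

end StarRing

theorem mul_eq_self_of_nonneg_of_mul_self_mul_eq_self {A : Type*} [Ring A] [PartialOrder A]
    [Algebra ℝ A] [NonnegSpectrumClass ℝ A] {a z : A} (ha : 0 ≤ a) (haz : a * a * z = z) :
    a * z = z := by
  have h_unit : IsUnit (a + 1) := by
    have h : (-1 : ℝ) ∉ spectrum ℝ a := fun h ↦ by
      linarith [spectrum_nonneg_of_nonneg ha h]
    rw [spectrum.notMem_iff, map_neg, map_one, ← neg_add', IsUnit.neg_iff] at h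
    rwa [add_comm]
  apply sub_eq_zero.mp
  apply h_unit.mul_right_eq_zero.mp
  calc (a + 1) * (a * z - z) = a * a * z - z := by noncomm_ring
    _ = 0 := sub_eq_zero.mpr haz

section ContinuousFunctionalCalculus

variable {A : Type*} [Ring A] [StarRing A] [TopologicalSpace A] [IsTopologicalRing A] [T2Space A]
  [Algebra ℝ A] [ContinuousFunctionalCalculus ℝ A IsSelfAdjoint] [PartialOrder A]
  [StarOrderedRing A] [NonnegSpectrumClass ℝ A]

theorem exists_unitary_mul_abs_eq {x : A} (hx : IsUnit x) :
    ∃ u ∈ unitary A, u * CFC.abs x = x := by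
  have h_abs : IsUnit (CFC.abs x) := by
    rw [← isUnit_mul_self_iff, CFC.abs_mul_abs]
    exact hx.star.mul hx
  obtain ⟨y, rfl⟩ := hx
  obtain ⟨b, hb⟩ := h_abs
  refine ⟨y * b⁻¹, (Units.mul_inv_mem_unitary y b).mpr (Units.ext ?_), ?_⟩
  · simp [hb, (CFC.abs_nonneg (y : A)).isSelfAdjoint.star_eq, CFC.abs_mul_abs]
  · rw [← hb, Units.inv_mul_cancel_right]

theorem exists_unitary_mul_eq_mul {x z : A} (hx : IsUnit x) (hz : star x * x * z = z) :
    ∃ u ∈ unitary A, u * z = x * z := by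
  obtain ⟨u, hu, hux⟩ := exists_unitary_mul_abs_eq hx
  have h_abs : CFC.abs x * z = z :=
    mul_eq_self_of_nonneg_of_mul_self_mul_eq_self (CFC.abs_nonneg x) (by rwa [CFC.abs_mul_abs])
  exact ⟨u, hu, by rw [← hux, mul_assoc, h_abs]⟩

theorem exists_unitary_mul_initial_eq {v : A} (hv : v * star v * v = v)
    (hunit : IsUnit (v + (1 - star v * v))) :
    ∃ u ∈ unitary A, u * (star v * v) = v := by
  simpa only [complementExtension.mul_initial hv] using
    exists_unitary_mul_eq_mul ((complementExtension.isUnit_iff hv).mpr hunit)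
      (complementExtension.star_mul_self_mul_initial hv)

theorem stmt_7_general (p : A) (hp : IsIdempotentElem p) (v : A) (hv : v = v * p)
    (hv' : star v * v = p)
    (hinv : ∃ k : A, k = p * k * p ∧ (p * v * p) * k = p ∧ k * (p * v * p) = p) :
    ∃ u : A, star u * u = 1 ∧ u * star u = 1 ∧ v = u * p := by
  obtain ⟨k, hk, hvk, hkv⟩ := hinv
  let compression : hp.Corner := ⟨p * v * p, v, rfl⟩
  have h_corner : IsUnit compression :=
    ⟨⟨compression, ⟨k, k, hk.symm⟩, Subtype.ext hvk, Subtype.ext hkv⟩, rfl⟩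
  have h_unit : IsUnit (v + (1 - p)) :=
    (isUnit_add_one_sub_iff_compression hp hv.symm).mpr
      (isUnit_add_one_sub_of_isUnit_corner hp h_corner)
  have h_partial : v * star v * v = v := by rw [mul_assoc, hv', ← hv]
  obtain ⟨u, ⟨hu, hu'⟩, huv⟩ :=
    exists_unitary_mul_initial_eq h_partial (by rwa [hv'])
  exact ⟨u, hu, hu', by rw [← hv', huv]⟩

end ContinuousFunctionalCalculus

/-- Let `v ∈ K_p` be such that `pvp` is invertible in the corner algebra `pAp`.
Then there exists a unitary `u ∈ A` with `v = up`. -/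
theorem stmt_7 {A : Type*} [CStarAlgebra A]
    (p : A) (hp_star : p = star p) (hp_idem : p * p = p)
    (v : A) (hv : v = v * p) (hv' : star v * v = p)
    (hinv : ∃ k : A, k = p * k * p ∧ (p * v * p) * k = p ∧ k * (p * v * p) = p) :
    ∃ u : A, star u * u = 1 ∧ u * star u = 1 ∧ v = u * p := by
  let _ : PartialOrder A := CStarAlgebra.spectralOrder A
  have _ : StarOrderedRing A := CStarAlgebra.spectralOrderedRing A
  exact stmt_7_general p hp_idem v hv hv' hinv
end

section
/- Let λ, μ ∈ A be positive invertible elements with ελε = λ^{-1} and εμε = μ^{-1}, where ε = 2p − 1. If there exists h ∈ pAp invertible in the corner algebra pAp such that (λp)h = μp, then λ = μ. (The map λ ↦ [λp] from the positive ε-unitaries to the projective space is injective.) -/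
/-!
Write `ε = 2p - 1`, so that `λελ = ε` and `μεμ = ε`, and suppose `λph = μp`. The element
`λ + ελε` is strictly positive, commutes with `p` and satisfies `p(λ + ελε) = 2pλp`; the same holds
for `μ`. Hence `ph = up` with `u = (λ + ελε)⁻¹(μ + εμε)` invertible and commuting with `p`.

The columns `λp` and `μp` have the same Gram element `(λp)*ε(λp) = pεp = p` for the form
given by `ε`, so `(up)*(up) = p`, and then `(up)(up)* = p` as well because `u` is invertible.
Therefore `μpμ = (μp)(μp)* = λ(up)(up)*λ = λpλ`. Expanding `λελ = ε` gives `λ² = 2λpλ - ε`, so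
`λ² = μ²`, and uniqueness of positive square roots gives `λ = μ`.
-/

lemma mul_mul_self_eq_of_conj_eq_inverse {M : Type*} [MonoidWithZero M] {e a : M}
    (he : e * e = 1) (ha : IsUnit a) (h : e * a * e = Ring.inverse a) : a * e * a = e :=
  calc a * e * a = a * (e * a * e) * e := by simp only [mul_assoc, he, mul_one]
    _ = e := by rw [h, Ring.mul_inverse_cancel a ha, one_mul]

section Ring

variable {R : Type*} [Ring R]

lemma mul_self_eq_mul_self_of_mul_mul_eq {p a b : R}
    (hε : a * (2 * p - 1) * a = b * (2 * p - 1) * b) (hp : a * p * a = b * p * b) :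
    a * a = b * b :=
  calc a * a = 2 * (a * p * a) - a * (2 * p - 1) * a := by noncomm_ring
    _ = 2 * (b * p * b) - b * (2 * p - 1) * b := by rw [hp, hε]
    _ = b * b := by noncomm_ring

variable {p : R}

lemma mul_two_mul_sub_one_of_isIdempotentElem (hp : IsIdempotentElem p) :
    p * (2 * p - 1) = p := by
  rw [mul_sub, mul_one, two_mul, mul_add, hp.eq, add_sub_cancel_right]

lemma two_mul_sub_one_mul_of_isIdempotentElem (hp : IsIdempotentElem p) :
    (2 * p - 1) * p = p := by
  rw [sub_mul, one_mul, two_mul, add_mul, hp.eq, add_sub_cancel_right]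

lemma mul_add_conj_eq_two_mul_compression (hp : IsIdempotentElem p) (a : R) :
    p * (a + (2 * p - 1) * a * (2 * p - 1)) = 2 * (p * a * p) :=
  calc p * (a + (2 * p - 1) * a * (2 * p - 1))
      = p * a + p * (2 * p - 1) * a * (2 * p - 1) := by simp only [mul_add, mul_assoc]
    _ = p * a + p * a * (2 * p - 1) := by rw [mul_two_mul_sub_one_of_isIdempotentElem hp]
    _ = 2 * (p * a * p) := by noncomm_ring

lemma add_conj_mul_eq_two_mul_compression (hp : IsIdempotentElem p) (a : R) :
    (a + (2 * p - 1) * a * (2 * p - 1)) * p = 2 * (p * a * p) :=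
  calc (a + (2 * p - 1) * a * (2 * p - 1)) * p
      = a * p + (2 * p - 1) * a * ((2 * p - 1) * p) := by simp only [add_mul, mul_assoc]
    _ = a * p + (2 * p - 1) * a * p := by rw [two_mul_sub_one_mul_of_isIdempotentElem hp]
    _ = 2 * (p * a * p) := by noncomm_ring

lemma commute_add_conj (hp : IsIdempotentElem p) (a : R) :
    Commute (a + (2 * p - 1) * a * (2 * p - 1)) p :=
  (add_conj_mul_eq_two_mul_compression hp a).trans (mul_add_conj_eq_two_mul_compression hp a).symm

lemma exists_isUnit_commute_mul_eq_of_mul_eq {a b h : R} (hp : IsIdempotentElem p)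
    (ha : IsUnit (a + (2 * p - 1) * a * (2 * p - 1)))
    (hb : IsUnit (b + (2 * p - 1) * b * (2 * p - 1))) (hab : a * p * h = b * p) :
    ∃ u, IsUnit u ∧ Commute u p ∧ u * p = p * h := by
  obtain ⟨c, hc⟩ := ha
  obtain ⟨d, hd⟩ := hb
  have hcp : Commute (c : R) p := hc ▸ commute_add_conj hp a
  have hdp : Commute (d : R) p := hd ▸ commute_add_conj hp b
  have intertwine : d * p = c * (p * h) :=
    calc d * p = 2 * (p * (b * p)) := by
          rw [hd, add_conj_mul_eq_two_mul_compression hp, mul_assoc p]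
      _ = 2 * (p * a * p) * h := by rw [← hab]; simp only [mul_assoc]
      _ = c * (p * h) := by rw [← add_conj_mul_eq_two_mul_compression hp, ← hc, mul_assoc]
  refine ⟨↑c⁻¹ * d, c⁻¹.isUnit.mul d.isUnit, hcp.units_inv_left.mul_left hdp, ?_⟩
  rw [mul_assoc, intertwine, Units.inv_mul_cancel_left]

end Ring

lemma isSelfAdjoint_two_mul_sub_one {R : Type*} [Ring R] [StarRing R] {p : R}
    (hp : IsSelfAdjoint p) : IsSelfAdjoint (2 * p - 1) :=
  two_mul p ▸ (hp.add hp).sub (.one R)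

lemma star_mul_self_eq_of_mul_eq {S : Type*} [Semigroup S] [StarMul S] {p e a b v : S}
    (hp : IsStarProjection p) (hep : e * p = p) (ha : star a * e * a = e)
    (hb : star b * e * b = e) (hv : p * v = v) (hab : a * v = b * p) : star v * v = p := by
  have hev : e * v = v := by rw [← hv, ← mul_assoc, hep]
  calc star v * v = star v * (star a * e * a) * v := by rw [ha, mul_assoc, hev]
    _ = star (a * v) * e * (a * v) := by simp only [star_mul, mul_assoc]
    _ = star p * (star b * e * b) * p := by rw [hab]; simp only [star_mul, mul_assoc]
    _ = p := by rw [hb, mul_assoc, hep, hp.isSelfAdjoint.star_eq, hp.isIdempotentElem.eq]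

lemma mul_mul_star_eq_of_mul_eq {S : Type*} [Semigroup S] [StarMul S] {p a b v : S}
    (hp : IsStarProjection p) (hv : v * star v = p) (hab : a * v = b * p) :
    b * p * star b = a * p * star a :=
  calc b * p * star b = b * (p * star p) * star b := by
        rw [hp.isSelfAdjoint.star_eq, hp.isIdempotentElem.eq]
    _ = b * p * star (b * p) := by simp only [star_mul, mul_assoc]
    _ = a * (v * star v) * star a := by rw [← hab]; simp only [star_mul, mul_assoc]
    _ = a * p * star a := by rw [hv]

lemma mul_star_self_eq_of_star_mul_self_eq {M : Type*} [Monoid M] [StarMul M] {p u : M}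
    (hp : IsStarProjection p) (hu : IsUnit u) (hup : Commute u p)
    (h : star (u * p) * (u * p) = p) : u * p * star (u * p) = p := by
  have star_mul_proj : star (u * p) * p = star (u * p) := by
    rw [hup.eq, star_mul, hp.isSelfAdjoint.star_eq, mul_assoc, hp.isIdempotentElem.eq]
  have star_mul_unit : star (u * p) * u = p := by
    rw [← star_mul_proj, mul_assoc, ← hup.eq, h]
  obtain ⟨w, rfl⟩ := hu
  calc w * p * star (w * p) = w * p * (p * ↑w⁻¹) := by
        rw [w.eq_mul_inv_iff_mul_eq.mpr star_mul_unit]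
    _ = p * w * ↑w⁻¹ := by rw [← mul_assoc, mul_assoc (w : M), hp.isIdempotentElem.eq, hup.eq]
    _ = p := Units.mul_inv_cancel_right p w

section CStarAlgebra

variable {A : Type*} [CStarAlgebra A] [PartialOrder A] [StarOrderedRing A]

lemma isUnit_add_conj {a e : A} (ha : IsStrictlyPositive a) (he : IsSelfAdjoint e) :
    IsUnit (a + e * a * e) :=
  (ha.add_nonneg (he.conjugate_nonneg ha.nonneg)).isUnit

theorem stmt_15_general {p lam mu h : A} (hp : IsStarProjection p)
    (hl_pos : IsStrictlyPositive lam) (hm_pos : IsStrictlyPositive mu)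
    (hl_eps : (2 * p - 1) * lam * (2 * p - 1) = Ring.inverse lam)
    (hm_eps : (2 * p - 1) * mu * (2 * p - 1) = Ring.inverse mu)
    (hlm : lam * p * h = mu * p) : lam = mu := by
  have hε := isSelfAdjoint_two_mul_sub_one hp.isSelfAdjoint
  have hεε : (2 * p - 1) * (2 * p - 1) = 1 := by
    simpa only [hε.star_eq] using Unitary.mul_star_self_of_mem hp.two_mul_sub_one_mem_unitary
  have hεp := two_mul_sub_one_mul_of_isIdempotentElem hp.isIdempotentElem
  have hl := mul_mul_self_eq_of_conj_eq_inverse hεε hl_pos.isUnit hl_eps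
  have hm := mul_mul_self_eq_of_conj_eq_inverse hεε hm_pos.isUnit hm_eps
  have hl_star := hl_pos.isSelfAdjoint.star_eq
  have hm_star := hm_pos.isSelfAdjoint.star_eq
  obtain ⟨u, hu, hup, hph⟩ := exists_isUnit_commute_mul_eq_of_mul_eq hp.isIdempotentElem
    (isUnit_add_conj hl_pos hε) (isUnit_add_conj hm_pos hε) hlm
  have transition : lam * (u * p) = mu * p := by rw [hph, ← mul_assoc, hlm]
  have isometry : star (u * p) * (u * p) = p :=
    star_mul_self_eq_of_mul_eq hp hεp (hl_star.symm ▸ hl) (hm_star.symm ▸ hm)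
      (by rw [hup.eq, ← mul_assoc, hp.isIdempotentElem.eq]) transition
  have coisometry : u * p * star (u * p) = p :=
    mul_star_self_eq_of_star_mul_self_eq hp hu hup isometry
  have conj_eq : lam * p * lam = mu * p * mu := by
    simpa only [hl_star, hm_star] using (mul_mul_star_eq_of_mul_eq hp coisometry transition).symm
  have sq_eq : lam * lam = mu * mu :=
    mul_self_eq_mul_self_of_mul_mul_eq (hl.trans hm.symm) conj_eq
  exact (CFC.mul_self_eq_mul_self_iff lam mu hl_pos.nonneg hm_pos.nonneg).mp sq_eq

end CStarAlgebra

/-- the map `λ ↦ [λp]` from the positive `ε`-unitaries to the projective space is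
injective. -/
theorem stmt_15 {A : Type*} [CStarAlgebra A] [PartialOrder A] [StarOrderedRing A]
    (p : A) (hp_star : p = star p) (hp_idem : p * p = p)
    (lam mu : A) (hl_pos : 0 ≤ lam) (hl_u : IsUnit lam)
    (hm_pos : 0 ≤ mu) (hm_u : IsUnit mu)
    (hl_eps : (2 * p - 1) * lam * (2 * p - 1) = Ring.inverse lam)
    (hm_eps : (2 * p - 1) * mu * (2 * p - 1) = Ring.inverse mu)
    (h : ∃ h : A, h = p * h * p ∧ (∃ k : A, k = p * k * p ∧ h * k = p ∧ k * h = p) ∧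
      (lam * p) * h = mu * p) :
    lam = mu := by
  obtain ⟨h, -, -, hlm⟩ := h
  exact stmt_15_general ⟨hp_idem, hp_star.symm⟩ (hl_u.isStrictlyPositive hl_pos)
    (hm_u.isStrictlyPositive hm_pos) hl_eps hm_eps hlm
end

section
/- Let v ∈ A satisfy v = vp, v*εv = p (where ε = 2p − 1), and suppose pvp is invertible in the corner algebra pAp. Then there exists an ε-unitary u ∈ A (u invertible, u*εu = ε) with v = up. (Equivalently, K'_p(A) = U_ε(A)·p.) -/
/-!
Write `ε = 2p - 1` and `q = 1 - p`. Gram-Schmidt for the indefinite form `(x, y) ↦ x*εy` replaces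
`q` by its component `ε`-orthogonal to `v`, namely `w = (1 - vv*ε)q = (1 + vv*)q`, and
`w*εw = -q(1 + vv*)q` is negative definite on `q`. Hence, for `r = (1 + qvv*q)^(-1/2)`, the element
`u = v + wr` satisfies `u*εu = ε` and `up = v`. It is invertible because it is a product of block
matrices, `u = (pvp + q)(1 + qv)(1 + v*q)(qrq + p)`, whose middle factors are unipotent.
-/

section Semiring

variable {R : Type*} [Semiring R] {p : R}

/-- The compression `p x p` of `x`, as an element of the corner ring `pRp`. -/
def compression (hp : IsIdempotentElem p) (x : R) : hp.Corner :=
  ⟨p * x * p, x, rfl⟩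

theorem isUnit_compression_iff (hp : IsIdempotentElem p) {x : R} :
    IsUnit (compression hp x) ↔
      ∃ k, k = p * k * p ∧ (p * x * p) * k = p ∧ k * (p * x * p) = p := by
  constructor
  · rintro ⟨u, hu⟩
    obtain ⟨hpk, hkp⟩ := (Subsemigroup.mem_corner_iff hp).mp u⁻¹.val.2
    have hxk : compression hp x * u⁻¹.val = 1 := hu ▸ u.mul_inv
    have hkx : u⁻¹.val * compression hp x = 1 := hu ▸ u.inv_mul
    exact ⟨u⁻¹.val.val, by rw [hpk, hkp], congrArg Subtype.val hxk, congrArg Subtype.val hkx⟩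
  · rintro ⟨k, hk, hxk, hkx⟩
    let k' : hp.Corner := ⟨k, k, hk.symm⟩
    exact ⟨⟨compression hp x, k', Subtype.ext hxk, Subtype.ext hkx⟩, rfl⟩

theorem isUnit_compression_of_commute (hp : IsIdempotentElem p) {x : R} (hx : IsUnit x)
    (hxp : Commute x p) : IsUnit (compression hp x) := by
  have compression_mul {y z : R} (hy : Commute y p) (hz : Commute z p) (hyz : y * z = 1) :
      compression hp y * compression hp z = 1 := by
    apply Subtype.ext
    change p * y * p * (p * z * p) = p
    rw [← hy.eq, ← hz.eq, hp.mul_mul_self, hp.mul_mul_self, hz.symm.mul_mul_mul_comm, hyz, hp.eq,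
      one_mul]
  obtain ⟨x, rfl⟩ := hx
  have hx'p : Commute (↑x⁻¹ : R) p := hxp.units_inv_left
  exact ⟨⟨_, _, compression_mul hxp hx'p x.mul_inv, compression_mul hx'p hxp x.inv_mul⟩, rfl⟩

end Semiring

section Ring

variable {R : Type*} [Ring R] {p : R}

theorem isUnit_corner_add_one_sub (hp : IsIdempotentElem p) {a : hp.Corner} (ha : IsUnit a) :
    IsUnit (a.val + (1 - p)) := by
  have corner_mul_one_sub (x : hp.Corner) : x.val * (1 - p) = 0 := by
    rw [mul_one_sub, ((Subsemigroup.mem_corner_iff hp).mp x.2).2, sub_self]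
  have one_sub_mul_corner (x : hp.Corner) : (1 - p) * x.val = 0 := by
    rw [one_sub_mul, ((Subsemigroup.mem_corner_iff hp).mp x.2).1, sub_self]
  have mul_eq_one {x y : hp.Corner} (hxy : x * y = 1) :
      (x.val + (1 - p)) * (y.val + (1 - p)) = 1 := by
    have hxy' : x.val * y.val = p := congrArg Subtype.val hxy
    rw [add_mul, mul_add, mul_add, hxy', corner_mul_one_sub, one_sub_mul_corner,
      hp.one_sub.eq, add_zero, zero_add, add_sub_cancel]
  obtain ⟨a, rfl⟩ := ha
  exact ⟨⟨_, _, mul_eq_one a.mul_inv, mul_eq_one a.inv_mul⟩, rfl⟩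

theorem isUnit_one_add_of_mul_self_eq_zero {x : R} (hx : x * x = 0) : IsUnit (1 + x) :=
  IsNilpotent.isUnit_one_add ⟨2, by rw [pow_two, hx]⟩

theorem isUnit_add_one_sub (hp : IsIdempotentElem p) {v : R} (hvp : v * p = v)
    (hv : IsUnit (compression hp v)) : IsUnit (v + (1 - p)) := by
  have hvq : v * (1 - p) = 0 := by rw [mul_one_sub, hvp, sub_self]
  have hqvqv : (1 - p) * v * ((1 - p) * v) = 0 := by
    rw [mul_assoc, ← mul_assoc v, hvq, zero_mul, mul_zero]
  have factorization : v + (1 - p) = ((compression hp v).val + (1 - p)) * (1 + (1 - p) * v) :=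
    calc v + (1 - p)
      _ = p * v + ((1 - p) + (1 - p) * v) := by rw [one_sub_mul]; abel
      _ = (p * v + (1 - p)) * (1 + (1 - p) * v) := by
        rw [add_mul, mul_one_add, mul_one_add, mul_assoc p v, ← mul_assoc v, hvq, zero_mul,
          mul_zero, add_zero, ← mul_assoc (1 - p), hp.one_sub.eq]
      _ = (p * v * p + (1 - p)) * (1 + (1 - p) * v) := by rw [mul_assoc p v p, hvp]
  rw [factorization]
  exact (isUnit_corner_add_one_sub hp hv).mul (isUnit_one_add_of_mul_self_eq_zero hqvqv)

theorem isUnit_add_one_add_mul_mul_one_sub {v y : R} (hpy : p * y = y)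
    (hv : IsUnit (v + (1 - p))) : IsUnit (v + (1 + v * y) * (1 - p)) := by
  have hqy : (1 - p) * y = 0 := by rw [one_sub_mul, hpy, sub_self]
  have hyqyq : y * (1 - p) * (y * (1 - p)) = 0 := by
    rw [mul_assoc, ← mul_assoc (1 - p), hqy, zero_mul, mul_zero]
  have factorization : v + (1 + v * y) * (1 - p) = (v + (1 - p)) * (1 + y * (1 - p)) := by
    rw [add_mul v, mul_one_add, mul_one_add, ← mul_assoc (1 - p), hqy, zero_mul, add_zero,
      one_add_mul, mul_assoc v, add_assoc, add_comm (1 - p)]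
  rw [factorization]
  exact hv.mul (isUnit_one_add_of_mul_self_eq_zero hyqyq)

theorem isUnit_add_mul_of_commute (hp : IsIdempotentElem p) {x y r : R} (hxp : x * p = x)
    (hyp : y * p = 0) (hr : IsUnit r) (hrp : Commute r p) (hxy : IsUnit (x + y)) :
    IsUnit (x + y * r) := by
  have hxq : x * (1 - p) = 0 := by rw [mul_one_sub, hxp, sub_self]
  have hyq : y * (1 - p) = y := by rw [mul_one_sub, hyp, sub_zero]
  have hrq : Commute r (1 - p) := .sub_right (.one_right r) hrp
  have factorization :
      x + y * r = (x + y) * ((compression hp.one_sub r).val + (1 - (1 - p))) := by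
    change _ = (x + y) * ((1 - p) * r * (1 - p) + (1 - (1 - p)))
    rw [sub_sub_cancel, mul_assoc (1 - p), hrq.eq, ← mul_assoc (1 - p), hp.one_sub.eq, mul_add,
      add_mul, add_mul, ← mul_assoc, ← mul_assoc, hxq, hyq, hxp, hyp, zero_mul, zero_add,
      add_zero, add_comm]
  rw [factorization]
  exact hxy.mul (isUnit_corner_add_one_sub hp.one_sub
    (isUnit_compression_of_commute hp.one_sub hr hrq))

theorem two_mul_sub_one_mul_one_sub (hp : IsIdempotentElem p) :
    (2 * p - 1) * (1 - p) = -(1 - p) := by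
  rw [sub_one_mul, mul_assoc, hp.mul_one_sub_self, mul_zero, zero_sub]

theorem one_sub_mul_two_mul_sub_one (hp : IsIdempotentElem p) :
    (1 - p) * (2 * p - 1) = -(1 - p) := by
  rw [mul_sub_one, two_mul, mul_add, hp.one_sub_mul_self, add_zero, zero_sub]

end Ring

section StarRing

theorem star_add_mul_mul_add_of_star_mul_mul_eq_zero {R : Type*} [NonUnitalSemiring R]
    [StarRing R] {e x y : R} (he : IsSelfAdjoint e) (hxy : star x * e * y = 0) :
    star (x + y) * e * (x + y) = star x * e * x + star y * e * y := by
  have hyx : star y * e * x = 0 := by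
    simpa [mul_assoc, he.star_eq] using congrArg star hxy
  rw [star_add, add_mul, add_mul, mul_add, mul_add, hxy, hyx, add_zero, zero_add]

theorem commute_one_add_mul_star_of_mul_eq_zero {R : Type*} [Semiring R] [StarRing R] {p b : R}
    (hp : IsSelfAdjoint p) (hpb : p * b = 0) : Commute (1 + b * star b) p := by
  have hbp : star b * p = 0 := by
    simpa [hp.star_eq] using congrArg star hpb
  rw [commute_iff_eq, add_mul, mul_add, mul_assoc, hbp, ← mul_assoc, hpb, one_mul, mul_one,
    mul_zero, zero_mul]

variable {R : Type*} [Ring R] [StarRing R]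

/-- The component of `1 - p` orthogonal to `v` for the indefinite form `(x, y) ↦ x* (2p - 1) y`,
assuming that `v` has the Gram matrix `v* (2p - 1) v = p`. -/
def signedComplement (p v : R) : R :=
  (1 - v * star v * (2 * p - 1)) * (1 - p)

variable {p v : R}

theorem signedComplement_eq (hp : IsIdempotentElem p) :
    signedComplement p v = (1 + v * star v) * (1 - p) := by
  rw [signedComplement, one_sub_mul, mul_assoc _ (2 * p - 1), two_mul_sub_one_mul_one_sub hp,
    mul_neg, sub_neg_eq_add, one_add_mul]

theorem signedComplement_mul_self (hp : IsIdempotentElem p) : signedComplement p v * p = 0 := by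
  rw [signedComplement, mul_assoc, hp.one_sub_mul_self, mul_zero]

theorem star_mul_mul_signedComplement (hpv : p * star v = star v)
    (hv : star v * (2 * p - 1) * v = p) :
    star v * (2 * p - 1) * signedComplement p v = 0 := by
  have orthogonal : star v * (2 * p - 1) * (1 - v * star v * (2 * p - 1)) = 0 := by
    rw [mul_one_sub, ← mul_assoc, ← mul_assoc, hv, hpv, sub_self]
  rw [signedComplement, ← mul_assoc, orthogonal, zero_mul]

theorem star_signedComplement_mul_mul_self (hp : IsStarProjection p)
    (hpv : p * star v = star v) (hv : star v * (2 * p - 1) * v = p) :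
    star (signedComplement p v) * (2 * p - 1) * signedComplement p v =
      -((1 + (1 - p) * v * star ((1 - p) * v)) * (1 - p)) := by
  have hq := hp.one_sub
  have hw : star (signedComplement p v) = (1 - p) + (1 - p) * v * star v := by
    rw [signedComplement_eq hp.isIdempotentElem]
    simp only [star_mul, star_add, star_one, star_star, hq.isSelfAdjoint.star_eq, mul_one_add,
      mul_assoc]
  calc star (signedComplement p v) * (2 * p - 1) * signedComplement p v
    _ = (1 - p) * (2 * p - 1) * signedComplement p v := by
      rw [hw, add_mul, add_mul, mul_assoc ((1 - p) * v), mul_assoc ((1 - p) * v),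
        star_mul_mul_signedComplement hpv hv, mul_zero, add_zero]
    _ = -((1 - p) * ((1 + v * star v) * (1 - p))) := by
      rw [one_sub_mul_two_mul_sub_one hp.isIdempotentElem, signedComplement_eq hp.isIdempotentElem,
        neg_mul]
    _ = -((1 + (1 - p) * v * star ((1 - p) * v)) * (1 - p)) := by
      rw [star_mul, hq.isSelfAdjoint.star_eq]
      simp only [one_add_mul, mul_add, mul_assoc, hq.isIdempotentElem.eq]

theorem star_mul_mul_add_signedComplement_mul (hp : IsStarProjection p)
    (hpv : p * star v = star v) (hv : star v * (2 * p - 1) * v = p) {r : R}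
    (hr : IsSelfAdjoint r) (hrp : Commute r p)
    (hrc : r * (1 + (1 - p) * v * star ((1 - p) * v)) * r = 1) :
    star (v + signedComplement p v * r) * (2 * p - 1) * (v + signedComplement p v * r) =
      2 * p - 1 := by
  have hsymm : IsSelfAdjoint (2 * p - 1) := by
    rw [two_mul]
    exact (hp.isSelfAdjoint.add hp.isSelfAdjoint).sub (.one R)
  have orthogonal : star v * (2 * p - 1) * (signedComplement p v * r) = 0 := by
    rw [← mul_assoc, star_mul_mul_signedComplement hpv hv, zero_mul]
  have hrq : Commute r (1 - p) := .sub_right (.one_right r) hrp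
  have normalized : star (signedComplement p v * r) * (2 * p - 1) * (signedComplement p v * r) =
      -(1 - p) :=
    calc star (signedComplement p v * r) * (2 * p - 1) * (signedComplement p v * r)
      _ = r * (star (signedComplement p v) * (2 * p - 1) * signedComplement p v) * r := by
        rw [star_mul, hr.star_eq]
        simp only [mul_assoc]
      _ = -(r * (1 + (1 - p) * v * star ((1 - p) * v)) * r * (1 - p)) := by
        rw [star_signedComplement_mul_mul_self hp hpv hv, mul_neg, neg_mul, ← mul_assoc, mul_assoc,
          ← hrq.eq, ← mul_assoc]
      _ = -(1 - p) := by rw [hrc, one_mul]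
  rw [star_add_mul_mul_add_of_star_mul_mul_eq_zero hsymm orthogonal, hv, normalized]
  noncomm_ring

end StarRing

section CStarAlgebra

variable {A : Type*} [CStarAlgebra A]

theorem exists_isSelfAdjoint_inv_sqrt_one_add_mul_star (b : A) :
    ∃ r : A, IsSelfAdjoint r ∧ IsUnit r ∧ r * (1 + b * star b) * r = 1 ∧
      ∀ x, Commute (1 + b * star b) x → Commute r x := by
  let : PartialOrder A := CStarAlgebra.spectralOrder A
  have : StarOrderedRing A := CStarAlgebra.spectralOrderedRing A
  have hpos : IsStrictlyPositive (1 + b * star b) :=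
    isStrictlyPositive_one.add_nonneg (mul_star_self_nonneg b)
  refine ⟨(1 + b * star b) ^ (-(1 / 2) : ℝ), .of_nonneg CFC.rpow_nonneg,
    (hpos.rpow _ _).isUnit, CFC.conjugate_rpow_neg_one_half _, fun x hx ↦ ?_⟩
  rw [CFC.rpow_def]
  exact hx.cfc_nnreal _

end CStarAlgebra

/-- if `v = vp`, `v*εv = p` and `pvp` is invertible in `pAp`, then `v = up` for
some `ε`-unitary `u`. -/
theorem stmt_16 {A : Type*} [CStarAlgebra A]
    (p : A) (hp_star : p = star p) (hp_idem : p * p = p)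
    (v : A) (hv : v = v * p) (hve : star v * (2 * p - 1) * v = p)
    (hinv : ∃ k : A, k = p * k * p ∧ (p * v * p) * k = p ∧ k * (p * v * p) = p) :
    ∃ u : A, IsUnit u ∧ star u * (2 * p - 1) * u = 2 * p - 1 ∧ v = u * p := by
  have hp : IsStarProjection p := ⟨hp_idem, hp_star.symm⟩
  have hidem : IsIdempotentElem p := hp_idem
  have hpv : p * star v = star v := by
    simpa [← hp_star] using congrArg star hv.symm
  have hpqv : p * ((1 - p) * v) = 0 := by
    rw [← mul_assoc, hp.mul_one_sub_self, zero_mul]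
  obtain ⟨r, hr, hrunit, hrc, hr_commute⟩ :=
    exists_isSelfAdjoint_inv_sqrt_one_add_mul_star ((1 - p) * v)
  have hrp : Commute r p :=
    hr_commute p (commute_one_add_mul_star_of_mul_eq_zero hp.isSelfAdjoint hpqv)
  have hwp : signedComplement p v * p = 0 := signedComplement_mul_self hidem
  have hvw : IsUnit (v + signedComplement p v) := by
    rw [signedComplement_eq hidem]
    exact isUnit_add_one_add_mul_mul_one_sub hpv
      (isUnit_add_one_sub hidem hv.symm ((isUnit_compression_iff hidem).mpr hinv))
  refine ⟨v + signedComplement p v * r,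
    isUnit_add_mul_of_commute hidem hv.symm hwp hrunit hrp hvw,
    star_mul_mul_add_signedComplement_mul hp hpv hve hr hrp hrc, ?_⟩
  rw [add_mul, mul_assoc, hrp.eq, ← mul_assoc, hwp, zero_mul, add_zero, ← hv]
end

section
/- Let λ ∈ A be a positive invertible element with ελε = λ^{-1}, where ε = 2p − 1. Then pλp is invertible in the corner algebra pAp and, with c denoting its inverse in pAp, ‖(1−p)λp · c‖ = tanh(‖log λ‖), where log λ is defined by continuous functional calculus. (Concrete form of the identity 2·E_n(m,[p]) = d₊(m,[p]) relating the non-Euclidean metric of the disc D⁺ to the geodesic metric of the positive ε-unitaries.) -/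
/-!
Put `X = log λ` and `ε = 2p - 1`. Conjugation by `ε` turns `λ` into `λ⁻¹`, hence `X` into `-X`; so
`ε` commutes with `cosh X` and anticommutes with `tanh X`. Therefore `λ = (1 + tanh X) cosh X`
writes `λ` as a diagonal invertible element multiplied by `1` plus an off-diagonal one. It follows
that `pλp = p cosh X` has the inverse `c = p (cosh X)⁻¹` in the corner, and that
`(1 - p)λp · c = (tanh X) p`. An off-diagonal self-adjoint element `t` equals `b + b⋆` with
`b = tp` and `b² = 0`, so `‖t‖ = ‖tp‖`; finally `‖tanh X‖ = tanh ‖X‖`.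
-/

section RealFunctions

theorem continuous_tanh : Continuous Real.tanh := by
  rw [funext Real.tanh_eq_sinh_div_cosh]
  exact Real.continuous_sinh.div Real.continuous_cosh fun x ↦ (Real.cosh_pos x).ne'

theorem monotone_tanh : Monotone Real.tanh := fun x y hxy ↦ by
  rwa [← Real.artanh_le_artanh_iff ⟨Real.neg_one_lt_tanh x, Real.tanh_lt_one x⟩
    ⟨Real.neg_one_lt_tanh y, Real.tanh_lt_one y⟩, Real.artanh_tanh, Real.artanh_tanh]

theorem one_add_tanh_mul_cosh (x : ℝ) : (1 + Real.tanh x) * Real.cosh x = Real.exp x := by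
  rw [add_mul, one_mul, Real.tanh_eq_sinh_div_cosh, div_mul_cancel₀ _ (Real.cosh_pos x).ne',
    Real.cosh_add_sinh]

theorem abs_apply_eq_apply_abs_of_odd_of_monotone {α β : Type*} [AddCommGroup α] [LinearOrder α]
    [IsOrderedAddMonoid α] [AddCommGroup β] [LinearOrder β] [IsOrderedAddMonoid β] {f : α → β}
    (hodd : f.Odd) (hmono : Monotone f) (x : α) : |f x| = f |x| := by
  rcases le_total 0 x with hx | hx
  · rw [abs_of_nonneg hx, abs_of_nonneg (hodd.map_zero ▸ hmono hx)]
  · rw [abs_of_nonpos hx, abs_of_nonpos (hodd.map_zero ▸ hmono hx), hodd]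

end RealFunctions

section OffDiagonal

theorem semiconjBy_of_mul_mul_eq {M : Type*} [Monoid M] {e x y : M} (he : e * e = 1)
    (h : e * x * e = y) : SemiconjBy e x y := by
  rw [SemiconjBy, ← h, mul_assoc _ e e, he, mul_one]

/-- `x` is off-diagonal with respect to `p` if `p * x + x * p = x`. When `p` is idempotent, this
says that both diagonal blocks `p * x * p` and `(1 - p) * x * (1 - p)` of `x` vanish. -/
def IsOffDiagonal {R : Type*} [Add R] [Mul R] (p x : R) : Prop :=
  p * x + x * p = x

theorem IsOffDiagonal.mul_mul_eq_zero {R : Type*} [NonUnitalRing R] {p x : R}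
    (hx : IsOffDiagonal p x) (hp : IsIdempotentElem p) : p * x * p = 0 := by
  have h : p * x * p + x * p = x * p := by
    calc p * x * p + x * p = (p * x + x * p) * p := by rw [add_mul, mul_assoc x, hp.eq]
      _ = x * p := by rw [hx]
  exact add_eq_right.mp h

variable {R : Type*} [Ring R] {p x : R}

theorem two_mul_sub_one_mul_self (hp : IsIdempotentElem p) : (2 * p - 1) * (2 * p - 1) = 1 := by
  calc (2 * p - 1) * (2 * p - 1) = 4 • (p * p - p) + 1 := by noncomm_ring
    _ = 1 := by rw [hp.eq, sub_self, smul_zero, zero_add]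

theorem commute_of_commute_two_mul_sub_one [IsAddTorsionFree R] (h : Commute (2 * p - 1) x) :
    Commute p x := by
  have h_two : 2 • (p * x) = 2 • (x * p) := by
    calc 2 • (p * x) = (2 * p - 1) * x + x := by noncomm_ring
      _ = x * (2 * p - 1) + x := by rw [h.eq]
      _ = 2 • (x * p) := by noncomm_ring
  exact nsmul_right_injective two_ne_zero h_two

theorem isOffDiagonal_of_semiconjBy_neg [IsAddTorsionFree R]
    (h : SemiconjBy (2 * p - 1) x (-x)) : IsOffDiagonal p x := by
  have h_two : 2 • (p * x + x * p) = 2 • x := by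
    calc 2 • (p * x + x * p) = (2 * p - 1) * x + x + 2 • (x * p) := by noncomm_ring
      _ = -x * (2 * p - 1) + x + 2 • (x * p) := by rw [h.eq]
      _ = 2 • x := by noncomm_ring
  exact nsmul_right_injective two_ne_zero h_two

theorem IsOffDiagonal.exists_corner_inverse {t : R} (ht : IsOffDiagonal p t)
    (hp : IsIdempotentElem p) {u : Rˣ} (hu : Commute p u) :
    ∃ c : R, c = p * c * p ∧ p * ((1 + t) * u) * p * c = p ∧ c * (p * ((1 + t) * u) * p) = p ∧
      (1 - p) * ((1 + t) * u) * p * c = t * p := by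
  have hpp : p * p = p := hp
  have hptp : p * t * p = 0 := ht.mul_mul_eq_zero hp
  have hu_inv : Commute p ↑u⁻¹ := hu.units_inv_right
  have h_move : (1 + t) * u * p = (1 + t) * p * u := by rw [mul_assoc, ← hu.eq, ← mul_assoc]
  have h_corner : p * ((1 + t) * u) * p = p * u := by
    calc p * ((1 + t) * u) * p = p * ((1 + t) * p * u) := by rw [mul_assoc, h_move]
      _ = (p * p + p * t * p) * u := by noncomm_ring
      _ = p * u := by rw [hpp, hptp, add_zero]
  have h_lower : (1 - p) * ((1 + t) * u) * p = t * p * u := by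
    calc (1 - p) * ((1 + t) * u) * p = (1 - p) * ((1 + t) * p * u) := by rw [mul_assoc, h_move]
      _ = (p - p * p + t * p - p * t * p) * u := by noncomm_ring
      _ = t * p * u := by rw [hpp, hptp, sub_self, zero_add, sub_zero]
  have h_cancel : ↑u * (p * ↑u⁻¹) = p := by rw [hu_inv.eq, Units.mul_inv_cancel_left]
  refine ⟨p * ↑u⁻¹, ?_, ?_, ?_, ?_⟩
  · rw [← mul_assoc, hpp, mul_assoc, ← hu_inv.eq, ← mul_assoc, hpp]
  · rw [h_corner, mul_assoc, h_cancel, hpp]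
  · rw [h_corner, hu_inv.eq, mul_assoc, ← mul_assoc p, hpp, hu.eq, Units.inv_mul_cancel_left]
  · rw [h_lower, mul_assoc, h_cancel, mul_assoc, hpp]

end OffDiagonal

section Norm

variable {A : Type*} [NonUnitalCStarAlgebra A]

theorem norm_add_star_of_mul_self_eq_zero {b : A} (hb : b * b = 0) : ‖b + star b‖ = ‖b‖ := by
  have hb_star : star b * star b = 0 := by rw [← star_mul, hb, star_zero]
  have h_orth : star b * b * (b * star b) = 0 := by
    rw [mul_assoc, ← mul_assoc b, hb, zero_mul, mul_zero]
  have h_sq : star (b + star b) * (b + star b) = star b * b + b * star b := by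
    rw [star_add, star_star, add_mul, mul_add, mul_add, hb, hb_star, add_zero, zero_add]
  rw [← mul_self_inj (norm_nonneg _) (norm_nonneg _), ← CStarRing.norm_star_mul_self, h_sq,
    (IsSelfAdjoint.star_mul_self b).norm_add_eq_max (.mul_star_self b) h_orth,
    CStarRing.norm_star_mul_self, CStarRing.norm_self_mul_star, max_self]

theorem IsOffDiagonal.norm_mul_eq {p x : A} (hx : IsOffDiagonal p x) (hp : IsStarProjection p)
    (hx_sa : IsSelfAdjoint x) : ‖x * p‖ = ‖x‖ := by
  have h_sq : x * p * (x * p) = 0 := by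
    rw [mul_assoc, ← mul_assoc p, hx.mul_mul_eq_zero hp.isIdempotentElem, mul_zero]
  have h_star : star (x * p) = p * x := by
    rw [star_mul, hx_sa.star_eq, hp.isSelfAdjoint.star_eq]
  rw [← norm_add_star_of_mul_self_eq_zero h_sq, h_star, add_comm, hx]

end Norm

section FunctionalCalculus

variable {A : Type*} [NormedRing A] [StarRing A] [NormedAlgebra ℝ A]

theorem norm_cfc_of_odd_of_monotone [IsometricContinuousFunctionalCalculus ℝ A IsSelfAdjoint]
    {f : ℝ → ℝ} (hodd : f.Odd) (hmono : Monotone f) {a : A}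
    (hf : ContinuousOn f (spectrum ℝ a)) (ha : IsSelfAdjoint a) : ‖cfc f a‖ = f ‖a‖ := by
  rcases subsingleton_or_nontrivial A with _ | _
  · rw [Subsingleton.elim (cfc f a) 0, Subsingleton.elim a 0, norm_zero, hodd.map_zero]
  have h_abs (x : ℝ) : ‖f x‖ = f ‖x‖ := abs_apply_eq_apply_abs_of_odd_of_monotone hodd hmono x
  obtain ⟨⟨x, hx, hxa⟩, h_le⟩ :=
    IsometricContinuousFunctionalCalculus.isGreatest_norm_spectrum (𝕜 := ℝ) a ha
  refine le_antisymm (norm_cfc_le ?_ fun y hy ↦ ?_) ?_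
  · exact hodd.map_zero ▸ hmono (norm_nonneg a)
  · exact (h_abs y).trans_le (hmono (h_le ⟨y, hy, rfl⟩))
  · rw [← hxa, ← h_abs]
    exact norm_apply_le_norm_cfc f a hx hf ha

theorem exp_eq_one_add_cfc_tanh_mul_cfc_cosh [ContinuousFunctionalCalculus ℝ A IsSelfAdjoint]
    {a : A} (ha : IsSelfAdjoint a) :
    NormedSpace.exp a = (1 + cfc Real.tanh a) * cfc Real.cosh a := by
  have h_tanh := continuous_tanh.continuousOn (s := spectrum ℝ a)
  rw [← CFC.real_exp_eq_normedSpace_exp ha, ← cfc_const_one ℝ a, ← cfc_add .., ← cfc_mul ..]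
  exact cfc_congr fun x _ ↦ (one_add_tanh_mul_cosh x).symm

theorem log_ringInverse [ContinuousFunctionalCalculus ℝ A IsSelfAdjoint]
    [ContinuousMap.UniqueHom ℝ A] {a : A} (ha : IsSelfAdjoint a) (ha_unit : IsUnit a) :
    CFC.log (Ring.inverse a) = -CFC.log a := by
  obtain ⟨a, rfl⟩ := ha_unit
  have h_ne : ∀ x ∈ spectrum ℝ (a : A), x ≠ 0 := fun x ↦ spectrum.ne_zero_of_mem_of_unit
  have h_inv : ContinuousOn (·⁻¹) (spectrum ℝ (a : A)) := by fun_prop (disch := assumption)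
  have h_log : ContinuousOn Real.log ((·⁻¹) '' spectrum ℝ (a : A)) := by
    refine Real.continuousOn_log.mono ?_
    rintro _ ⟨x, hx, rfl⟩
    exact inv_ne_zero (h_ne x hx)
  rw [CFC.log, CFC.log, ← cfc_ringInverse_id (R := ℝ) (a : A) a.isUnit, ← cfc_comp' .., ← cfc_neg]
  exact cfc_congr fun x _ ↦ Real.log_inv x

end FunctionalCalculus

section Conjugation

variable {A : Type*} [NormedRing A] [StarRing A] [NormedAlgebra ℝ A]
  [ContinuousFunctionalCalculus ℝ A IsSelfAdjoint] [ContinuousMap.UniqueHom ℝ A] {u a b : A}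
  {f : ℝ → ℝ}

theorem semiconjBy_cfc (hu : u ∈ unitary A) (h : SemiconjBy u a b)
    (hf : ContinuousOn f (spectrum ℝ a)) (ha : IsSelfAdjoint a) :
    SemiconjBy u (cfc f a) (cfc f b) := by
  let φ := Unitary.conjStarAlgAut ℝ A ⟨u, hu⟩
  have hφ (x : A) : φ x = u * x * star u := rfl
  have hφ_cont : Continuous φ := (continuous_const.mul continuous_id).mul continuous_const
  have hφa : φ a = b := by
    rw [hφ, h.eq, mul_assoc, Unitary.mul_star_self_of_mem hu, mul_one]
  have hφ_cfc : φ (cfc f a) = cfc f b := by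
    rw [← hφa]
    exact StarAlgHomClass.map_cfc (S := ℝ) φ f a hf hφ_cont ha (ha.map φ)
  rw [SemiconjBy, ← hφ_cfc, hφ, mul_assoc _ (star u), Unitary.star_mul_self_of_mem hu, mul_one]

theorem commute_cfc_of_even (hu : u ∈ unitary A) (h : SemiconjBy u a (-a)) (heven : f.Even)
    (hf : Continuous f) (ha : IsSelfAdjoint a) : Commute u (cfc f a) := by
  have h_cfc := semiconjBy_cfc hu h hf.continuousOn ha
  rwa [← cfc_comp_neg f a hf.continuousOn ha, funext heven] at h_cfc

theorem semiconjBy_neg_cfc_of_odd (hu : u ∈ unitary A) (h : SemiconjBy u a (-a)) (hodd : f.Odd)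
    (hf : Continuous f) (ha : IsSelfAdjoint a) : SemiconjBy u (cfc f a) (-cfc f a) := by
  have h_cfc := semiconjBy_cfc hu h hf.continuousOn ha
  rwa [← cfc_comp_neg f a hf.continuousOn ha, funext hodd, cfc_neg] at h_cfc

theorem semiconjBy_neg_log_of_ringInverse (hu : u ∈ unitary A)
    (h : SemiconjBy u a (Ring.inverse a)) (ha : IsSelfAdjoint a) (ha_unit : IsUnit a) :
    SemiconjBy u (CFC.log a) (-CFC.log a) := by
  rw [← log_ringInverse ha ha_unit]
  obtain ⟨a, rfl⟩ := ha_unit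
  exact semiconjBy_cfc hu h
    (Real.continuousOn_log.mono fun x ↦ spectrum.ne_zero_of_mem_of_unit) ha

end Conjugation

/-- for a positive `ε`-unitary `λ`, `pλp` is invertible in `pAp` and, with `c` its
inverse in `pAp`, `‖(1−p)λp·c‖ = tanh ‖log λ‖`. -/
theorem stmt_18 {A : Type*} [CStarAlgebra A] [PartialOrder A] [StarOrderedRing A]
    (p : A) (hp_star : p = star p) (hp_idem : p * p = p)
    (lam : A) (hl_pos : 0 ≤ lam) (hl_u : IsUnit lam)
    (hl_eps : (2 * p - 1) * lam * (2 * p - 1) = Ring.inverse lam) :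
    ∃ c : A, c = p * c * p ∧ (p * lam * p) * c = p ∧ c * (p * lam * p) = p ∧
      ‖(1 - p) * lam * p * c‖ = Real.tanh ‖CFC.log lam‖ := by
  have hp : IsStarProjection p := ⟨hp_idem, hp_star.symm⟩
  have h_mem := hp.two_mul_sub_one_mem_unitary
  have h_inv : SemiconjBy (2 * p - 1) lam (Ring.inverse lam) :=
    semiconjBy_of_mul_mul_eq (two_mul_sub_one_mul_self hp_idem) hl_eps
  have h_log := semiconjBy_neg_log_of_ringInverse h_mem h_inv hl_pos.isSelfAdjoint hl_u
  have h_sa : IsSelfAdjoint (CFC.log lam) := .log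
  have h_torsionFree : IsAddTorsionFree A := .of_isTorsionFree ℝ A
  have h_offDiag : IsOffDiagonal p (cfc Real.tanh (CFC.log lam)) :=
    isOffDiagonal_of_semiconjBy_neg
      (semiconjBy_neg_cfc_of_odd h_mem h_log Real.tanh_neg continuous_tanh h_sa)
  obtain ⟨u, hu⟩ : IsUnit (cfc Real.cosh (CFC.log lam)) :=
    (isUnit_cfc_iff _ _).mpr fun x _ ↦ (Real.cosh_pos x).ne'
  have h_comm : Commute p u := hu ▸ commute_of_commute_two_mul_sub_one
    (commute_cfc_of_even h_mem h_log Real.cosh_neg Real.continuous_cosh h_sa)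
  have h_lam : lam = (1 + cfc Real.tanh (CFC.log lam)) * u := by
    rw [hu, ← exp_eq_one_add_cfc_tanh_mul_cfc_cosh h_sa,
      CFC.exp_log lam (hl_u.isStrictlyPositive hl_pos)]
  obtain ⟨c, hc, h_right, h_left, h_lower⟩ := h_offDiag.exists_corner_inverse hp_idem h_comm
  rw [← h_lam] at h_right h_left h_lower
  refine ⟨c, hc, h_right, h_left, ?_⟩
  rw [h_lower, h_offDiag.norm_mul_eq hp (cfc_predicate _ _),
    norm_cfc_of_odd_of_monotone Real.tanh_neg monotone_tanh continuous_tanh.continuousOn h_sa]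
end
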